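/- arXiv:2002.09526 — 5 statements merged into one kernel-verified Lean document; each statement's English description precedes it below -/
import Mathlib

section
/- Let (Ω, μ) be a probability space, let d ≥ 1, and let P : Ω → ℝ^{d×d} be a measurable map such that, for almost every ω, P(ω) is a symmetric idempotent matrix (P(ω)ᵀ = P(ω) and P(ω)² = P(ω)), and suppose that the entrywise expectation satisfies E[P] = (τ/d)·I_d for some real τ with 0 < τ ≤ d. Then for every h ∈ ℝ^d, E[‖P(ω)h‖³] ≤ (τ/d)·‖h‖³. -/
open Matrix MeasureTheory

/-- Reinterpret a plain vector as an element of Euclidean space. -/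
noncomputable def toE {n : ℕ} (v : Fin n → ℝ) : EuclideanSpace ℝ (Fin n) := WithLp.toLp 2 v

lemma normE_sq {n : ℕ} (v : Fin n → ℝ) : ‖toE v‖ ^ 2 = ∑ i, v i * v i := by
  rw [EuclideanSpace.norm_sq_eq]
  refine Finset.sum_congr rfl fun i _ => ?_
  simp [toE, sq]

lemma proj_sq {n : ℕ} {A : Matrix (Fin n) (Fin n) ℝ} (hs : Aᵀ = A) (hi : A * A = A)
    (h : Fin n → ℝ) : ‖toE (A.mulVec h)‖ ^ 2 = ∑ i, ∑ j, h i * A i j * h j := by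
  have e : A.mulVec h ⬝ᵥ A.mulVec h = h ⬝ᵥ A.mulVec h := by
    rw [Matrix.dotProduct_mulVec, ← Matrix.mulVec_transpose, hs, Matrix.mulVec_mulVec, hi,
      dotProduct_comm]
  rw [normE_sq]
  refine Eq.trans e ?_
  simp [dotProduct, Matrix.mulVec, Finset.mul_sum, mul_assoc]

lemma proj_le {n : ℕ} {A : Matrix (Fin n) (Fin n) ℝ} (hs : Aᵀ = A) (hi : A * A = A)
    (h : Fin n → ℝ) : ‖toE (A.mulVec h)‖ ≤ ‖toE h‖ := by
  have e : ‖toE (A.mulVec h)‖ ^ 2 = inner ℝ (toE (A.mulVec h)) (toE h) := by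
    rw [proj_sq hs hi]
    simp [toE, dotProduct, PiLp.inner_apply, Matrix.mulVec, Finset.mul_sum, mul_assoc]
  have c := real_inner_le_norm (toE (A.mulVec h)) (toE h)
  rw [← e] at c
  by_contra! hc
  nlinarith [norm_nonneg (toE h), norm_nonneg (toE (A.mulVec h))]

lemma entry_bound {n : ℕ} {A : Matrix (Fin n) (Fin n) ℝ} (hs : Aᵀ = A) (hi : A * A = A)
    (i j : Fin n) : ‖A i j‖ ≤ 1 := by
  have a : ∀ i, A i j ^ 2 ≤ A j j := by
    intro i
    have : A j j = ∑ k, A k j ^ 2 := by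
      conv_lhs => rw [← hi]
      rw [Matrix.mul_apply]
      refine Finset.sum_congr rfl fun k _ => ?_
      have : A j k = A k j := congrFun (congrFun hs k) j
      rw [this, sq]
    rw [this]
    exact Finset.single_le_sum (f := fun k => A k j ^ 2) (fun k _ => sq_nonneg _)
      (Finset.mem_univ i)
  have b := a i
  have c := a j
  have : A j j ≤ 1 := by nlinarith
  rw [Real.norm_eq_abs]
  exact abs_le_one_iff_mul_self_le_one.mpr (by nlinarith)

/-- If `P : Ω → ℝ^{d×d}` is a.e. a symmetric idempotent (an orthogonal
projection) with entrywise expectation `E[P] = (τ/d)·I`, then for every `h ∈ ℝ^d`,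
`E[‖P(ω)h‖³] ≤ (τ/d)·‖h‖³`. -/
theorem expected_cubed_norm_projection
    {Ω : Type*} [MeasurableSpace Ω] (μ : MeasureTheory.Measure Ω) [IsProbabilityMeasure μ]
    (d : ℕ) (hd : 1 ≤ d) (P : Ω → Matrix (Fin d) (Fin d) ℝ)
    (hmeas : ∀ i j, Measurable fun ω => P ω i j)
    (hproj : ∀ᵐ ω ∂μ, (P ω)ᵀ = P ω ∧ P ω * P ω = P ω)
    (τ : ℝ) (hτ : 0 < τ) (hτd : τ ≤ (d : ℝ))
    (hE : ∀ i j, ∫ ω, P ω i j ∂μ = (τ / d) * (1 : Matrix (Fin d) (Fin d) ℝ) i j)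
    (hint : ∀ h : Fin d → ℝ, Integrable (fun ω => ‖toE ((P ω).mulVec h)‖ ^ 3) μ) :
    ∀ h : Fin d → ℝ, ∫ ω, ‖toE ((P ω).mulVec h)‖ ^ 3 ∂μ ≤ (τ / d) * ‖toE h‖ ^ 3 := by
  intro h
  have hbd : ∀ i j, Integrable (fun ω => P ω i j) μ := by
    intro i j
    refine Integrable.of_bound (hmeas i j).aestronglyMeasurable 1 ?_
    filter_upwards [hproj] with ω hω
    exact entry_bound hω.1 hω.2 i j
  have hterm : ∀ i j, Integrable (fun ω => h i * P ω i j * h j) μ :=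
    fun i j => ((hbd i j).const_mul (h i)).mul_const (h j)
  have hI : ∫ ω, ∑ i, ∑ j, h i * P ω i j * h j ∂μ = (τ / d) * ‖toE h‖ ^ 2 := by
    rw [integral_finsetSum _ (fun i _ => integrable_finsetSum _ (fun j _ => hterm i j)), normE_sq,
      Finset.mul_sum]
    refine Finset.sum_congr rfl fun i _ => ?_
    rw [integral_finsetSum _ (fun j _ => hterm i j)]
    simp_rw [integral_mul_const, integral_const_mul, hE]
    simp [Matrix.one_apply]
    ring
  calc ∫ ω, ‖toE ((P ω).mulVec h)‖ ^ 3 ∂μ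
      ≤ ∫ ω, ‖toE h‖ * ∑ i, ∑ j, h i * P ω i j * h j ∂μ := by
        refine integral_mono_ae (hint h) ((integrable_finsetSum _ (fun i _ =>
          integrable_finsetSum _ (fun j _ => hterm i j))).const_mul _) ?_
        filter_upwards [hproj] with ω hω
        have h1 := proj_sq hω.1 hω.2 h
        have h2 := proj_le hω.1 hω.2 h
        rw [← h1, pow_succ']
        gcongr
    _ = _ := by
        rw [integral_const_mul, hI]; ring
end

section
/- Let f : ℝ^d → ℝ be convex and twice continuously differentiable with L-Lipschitz continuous gradient (∇²f(x) ⪯ L·I_d for all x) and M-Lipschitz continuous Hessian (‖∇²f(x) − ∇²f(y)‖_op ≤ M‖x − y‖ for all x, y). Let (Ω, μ) be a probability space, 1 ≤ τ ≤ d integers, and S : Ω → ℝ^{d×τ} a measurable map such that, for almost every ω, S(ω) has full column rank and E[P^{S(ω)}] = (τ/d)·I_d, where P^S := S(SᵀS)⁻¹Sᵀ. Fix x ∈ ℝ^d and let h : Ω → ℝ^τ be such that, for almost every ω, h(ω) is a global minimizer over ℝ^τ of the cubic model T_{S(ω)}(x, h) := ⟨S(ω)ᵀ∇f(x), h⟩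 + (1/2)⟨S(ω)ᵀ∇²f(x)S(ω) h, h⟩ + (M/6)‖S(ω)h‖³, and set x⁺(ω) := x + S(ω)h(ω). Then for every y ∈ ℝ^d: E[f(x⁺)] ≤ (1 − τ/d)·f(x) + (τ/d)·f(y) + (τ/d)·( ((d−τ)/d)·(L/2)·‖y − x‖² + (M/3)·‖y − x‖³ ). -/
open Matrix MeasureTheory

/-- Reinterpret an element of Euclidean space as a plain vector. -/
noncomputable def fromE {n : ℕ} (v : EuclideanSpace ℝ (Fin n)) : Fin n → ℝ := v


theorem aux_onedim (φ φ1 φ2 : ℝ → ℝ) (C : ℝ)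
    (h1 : ∀ t, HasDerivAt φ (φ1 t) t) (h2 : ∀ t, HasDerivAt φ1 (φ2 t) t)
    (hC : ∀ t, 0 ≤ t → |φ2 t - φ2 0| ≤ C * t) :
    |φ 1 - φ 0 - φ1 0 - 1 / 2 * φ2 0| ≤ C / 6 := by
  have d1 : ∀ t, HasDerivAt (fun t => φ1 t - φ1 0 - t * φ2 0) (φ2 t - φ2 0) t := by
    intro t
    have := ((h2 t).sub_const (φ1 0)).sub ((hasDerivAt_id t).mul_const (φ2 0))
    exact this.congr_deriv (by ring)
  have b1 : ∀ t ∈ Set.Icc (0:ℝ) 1, ‖φ1 t - φ1 0 - t * φ2 0‖ ≤ C * t ^ 2 / 2 := by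
    intro t ht
    refine image_norm_le_of_norm_deriv_right_le_deriv_boundary
      (f := fun t => φ1 t - φ1 0 - t * φ2 0) (f' := fun t => φ2 t - φ2 0)
      (B := fun t => C * t ^ 2 / 2) (B' := fun t => C * t) (a := 0) (b := 1)
      (fun t _ => (d1 t).continuousAt.continuousWithinAt)
      (fun t _ => (d1 t).hasDerivWithinAt) (by simp) ?_ ?_ ht
    · intro t
      have := ((hasDerivAt_pow 2 t).const_mul C).div_const 2
      exact this.congr_deriv (by norm_num; ring)
    · intro t ht
      exact hC t ht.1
  have d2 : ∀ t, HasDerivAt (fun t => φ t - φ 0 - t * φ1 0 - t ^ 2 / 2 * φ2 0)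
      (φ1 t - φ1 0 - t * φ2 0) t := by
    intro t
    have := (((h1 t).sub_const (φ 0)).sub ((hasDerivAt_id t).mul_const (φ1 0))).sub
      (((hasDerivAt_pow 2 t).div_const 2).mul_const (φ2 0))
    exact this.congr_deriv (by norm_num)
  have b2 : ∀ t ∈ Set.Icc (0:ℝ) 1, ‖φ t - φ 0 - t * φ1 0 - t ^ 2 / 2 * φ2 0‖ ≤ C * t ^ 3 / 6 := by
    intro t ht
    refine image_norm_le_of_norm_deriv_right_le_deriv_boundary
      (f := fun t => φ t - φ 0 - t * φ1 0 - t ^ 2 / 2 * φ2 0)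
      (f' := fun t => φ1 t - φ1 0 - t * φ2 0)
      (B := fun t => C * t ^ 3 / 6) (B' := fun t => C * t ^ 2 / 2) (a := 0) (b := 1)
      (fun t _ => (d2 t).continuousAt.continuousWithinAt)
      (fun t _ => (d2 t).hasDerivWithinAt) (by simp) ?_ ?_ ht
    · intro t
      have := ((hasDerivAt_pow 3 t).const_mul C).div_const 6
      exact this.congr_deriv (by norm_num; ring)
    · intro t ht
      exact b1 t ⟨ht.1, ht.2.le⟩
  have := b2 1 (by simp)
  simpa using this

theorem aux_taylor {E : Type*} [NormedAddCommGroup E] [InnerProductSpace ℝ E] [CompleteSpace E]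
    (f : E → ℝ) (hf : ContDiff ℝ 2 f) (M : ℝ)
    (hH : ∀ x y : E, ‖fderiv ℝ (gradient f) x - fderiv ℝ (gradient f) y‖ ≤ M * ‖x - y‖)
    (x v : E) :
    |f (x + v) - f x - inner ℝ (gradient f x) v
      - 1 / 2 * inner ℝ (fderiv ℝ (gradient f) x v) v| ≤ M / 6 * ‖v‖ ^ 3 := by
  have hg : Differentiable ℝ (gradient f) := by
    have h1 : Differentiable ℝ (fderiv ℝ f) :=
      (hf.fderiv_right (m := 1) (by norm_num)).differentiable (by norm_num)
    exact (InnerProductSpace.toDual ℝ E).symm.toContinuousLinearEquiv.differentiable.comp h1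
  have hl : ∀ t : ℝ, HasDerivAt (fun t : ℝ => x + t • v) v t := by
    intro t
    simpa using ((hasDerivAt_id t).smul_const v).const_add x
  have h1 : ∀ t : ℝ, HasDerivAt (fun t : ℝ => f (x + t • v))
      (inner ℝ (gradient f (x + t • v)) v) t := by
    intro t
    have hd := (hf.differentiable (by norm_num) (x + t • v)).hasGradientAt.hasFDerivAt
    have := hd.comp_hasDerivAt t (hl t)
    exact this.congr_deriv (by simp)
  have h2 : ∀ t : ℝ, HasDerivAt (fun t : ℝ => (inner ℝ (gradient f (x + t • v)) v : ℝ))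
      (inner ℝ (fderiv ℝ (gradient f) (x + t • v) v) v) t := by
    intro t
    have hd := (hg (x + t • v)).hasFDerivAt.comp_hasDerivAt t (hl t)
    have := hd.inner ℝ (hasDerivAt_const t v)
    simpa using this
  have := aux_onedim _ _ _ (M * ‖v‖ ^ 3) h1 h2 (by
    intro t ht
    rw [← inner_sub_left, ← _root_.sub_apply]
    refine (abs_real_inner_le_norm _ _).trans ?_
    calc _ ≤ (M * ‖(x + t • v) - (x + (0:ℝ) • v)‖ * ‖v‖) * ‖v‖ := by
          gcongr
          refine (ContinuousLinearMap.le_opNorm _ _).trans ?_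
          gcongr
          exact hH _ _
      _ = M * ‖v‖ ^ 3 * t := by
          simp [norm_smul, abs_of_nonneg ht]
          ring)
  simp only [one_smul, zero_smul, add_zero] at this
  refine this.trans (le_of_eq (by ring))

theorem aux_dot {d τ : ℕ} (A : Matrix (Fin d) (Fin τ) ℝ) (g : EuclideanSpace ℝ (Fin d))
    (h : Fin τ → ℝ) : Aᵀ.mulVec (fromE g) ⬝ᵥ h = inner ℝ g (toE (A.mulVec h)) := by
  rw [Matrix.mulVec_transpose, ← Matrix.dotProduct_mulVec]
  simp [toE, fromE, EuclideanSpace.inner_eq_star_dotProduct, dotProduct_comm]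

/-- The sketch projection. -/
noncomputable def auxP {d τ : ℕ} (A : Matrix (Fin d) (Fin τ) ℝ) : Matrix (Fin d) (Fin d) ℝ :=
  A * (Aᵀ * A)⁻¹ * Aᵀ

theorem auxP_inner {d τ : ℕ} (A : Matrix (Fin d) (Fin τ) ℝ) (hA : IsUnit (Aᵀ * A))
    (u : EuclideanSpace ℝ (Fin d)) :
    inner ℝ (toE ((auxP A).mulVec (fromE u))) (toE ((auxP A).mulVec (fromE u)))
      = (inner ℝ u (toE ((auxP A).mulVec (fromE u))) : ℝ) := by
  have hdet := (Matrix.isUnit_iff_isUnit_det _).1 hA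
  have hT : (auxP A)ᵀ = auxP A := by
    simp [auxP, Matrix.transpose_mul, Matrix.transpose_nonsing_inv, Matrix.mul_assoc]
  have hPP : auxP A * auxP A = auxP A := by
    unfold auxP
    calc _ = A * ((Aᵀ * A)⁻¹ * (Aᵀ * A)) * (Aᵀ * A)⁻¹ * Aᵀ := by
          simp only [Matrix.mul_assoc]
      _ = _ := by rw [Matrix.nonsing_inv_mul _ hdet, Matrix.mul_one]
  rw [← aux_dot, hT]
  have : fromE (toE ((auxP A).mulVec (fromE u))) = (auxP A).mulVec (fromE u) := rfl
  rw [this, Matrix.mulVec_mulVec, hPP]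
  simp [toE, fromE, EuclideanSpace.inner_eq_star_dotProduct]

theorem auxP_norm {d τ : ℕ} (A : Matrix (Fin d) (Fin τ) ℝ) (hA : IsUnit (Aᵀ * A))
    (u : EuclideanSpace ℝ (Fin d)) : ‖toE ((auxP A).mulVec (fromE u))‖ ≤ ‖u‖ := by
  have h := auxP_inner A hA u
  have h2 := real_inner_le_norm u (toE ((auxP A).mulVec (fromE u)))
  rw [real_inner_self_eq_norm_sq] at h
  by_contra hlt
  push Not at hlt
  nlinarith [norm_nonneg u, norm_nonneg (toE ((auxP A).mulVec (fromE u)))]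

theorem auxP_meas {d τ : ℕ} {Ω : Type*} [MeasurableSpace Ω]
    (S : Ω → Matrix (Fin d) (Fin τ) ℝ)
    (hmeas : ∀ i j, Measurable fun ω => S ω i j) (i j : Fin d) :
    Measurable fun ω => auxP (S ω) i j := by
  have hG : ∀ a b, Measurable fun ω => ((S ω)ᵀ * S ω) a b := by
    intro a b
    simp only [Matrix.mul_apply, Matrix.transpose_apply]
    fun_prop
  have hG' : Measurable fun ω => (fun a b => ((S ω)ᵀ * S ω) a b : Fin τ → Fin τ → ℝ) :=
    measurable_pi_iff.2 fun a => measurable_pi_iff.2 fun b => hG a b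
  have hdet : Measurable fun ω => ((S ω)ᵀ * S ω).det := by
    have hc : Continuous fun A : Fin τ → Fin τ → ℝ => (Matrix.of A).det :=
      Continuous.matrix_det (continuous_id)
    exact hc.measurable.comp hG'
  have hadj : ∀ a b, Measurable fun ω => ((S ω)ᵀ * S ω).adjugate a b := by
    intro a b
    have hc : Continuous fun A : Fin τ → Fin τ → ℝ => (Matrix.of A).adjugate a b :=
      (Continuous.matrix_adjugate (continuous_id)).matrix_elem a b
    exact hc.measurable.comp hG'
  have hinv : ∀ a b, Measurable fun ω => ((S ω)ᵀ * S ω)⁻¹ a b := by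
    intro a b
    simp only [Matrix.inv_def, Matrix.smul_apply, Ring.inverse_eq_inv', smul_eq_mul]
    exact hdet.inv.mul (hadj a b)
  simp only [auxP, Matrix.mul_apply (M := _ * _), Matrix.transpose_apply]
  refine Finset.measurable_fun_sum _ fun k _ => Measurable.mul ?_ (hmeas _ _)
  simp only [Matrix.mul_apply (M := S _)]
  exact Finset.measurable_fun_sum _ fun l _ => (hmeas _ _).mul (hinv _ _)

theorem auxP_integral {d τ : ℕ} {Ω : Type*} [MeasurableSpace Ω] (μ : Measure Ω)
    [IsProbabilityMeasure μ]
    (S : Ω → Matrix (Fin d) (Fin τ) ℝ)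
    (hmeas : ∀ i j, Measurable fun ω => S ω i j)
    (hrank : ∀ᵐ ω ∂μ, IsUnit ((S ω)ᵀ * S ω)) (p : ℝ)
    (hE : ∀ i j, ∫ ω, auxP (S ω) i j ∂μ = p * (1 : Matrix (Fin d) (Fin d) ℝ) i j)
    (v u : EuclideanSpace ℝ (Fin d)) :
    Integrable (fun ω => (inner ℝ v (toE ((auxP (S ω)).mulVec (fromE u))) : ℝ)) μ ∧
    ∫ ω, (inner ℝ v (toE ((auxP (S ω)).mulVec (fromE u))) : ℝ) ∂μ = p * inner ℝ v u := by
  have hI : ∀ i j, Integrable (fun ω => auxP (S ω) i j) μ := by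
    intro i j
    refine Integrable.of_bound (auxP_meas S hmeas i j).aestronglyMeasurable 1 ?_
    filter_upwards [hrank] with ω hω
    have h1 := auxP_norm (S ω) hω (EuclideanSpace.single j 1)
    have h2 := PiLp.norm_apply_le (toE ((auxP (S ω)).mulVec
      (fromE (EuclideanSpace.single j (1:ℝ))))) i
    have h3 : (toE ((auxP (S ω)).mulVec (fromE (EuclideanSpace.single j (1:ℝ))))) i
        = auxP (S ω) i j := by
      simp [toE, fromE, Matrix.mulVec, dotProduct]
    rw [h3] at h2
    simpa using h2.trans h1
  have hexp : ∀ ω, (inner ℝ v (toE ((auxP (S ω)).mulVec (fromE u))) : ℝ)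
      = ∑ i, ∑ j, v i * (auxP (S ω) i j * u j) := by
    intro ω
    simp [toE, fromE, PiLp.inner_apply, Matrix.mulVec, dotProduct, Finset.mul_sum, mul_comm]
  simp only [hexp]
  have hI2 : ∀ i j, Integrable (fun ω => v i * (auxP (S ω) i j * u j)) μ :=
    fun i j => ((hI i j).mul_const _).const_mul _
  refine ⟨integrable_finsetSum _ fun i _ => integrable_finsetSum _ fun j _ => hI2 i j, ?_⟩
  rw [integral_finsetSum _ fun i _ => integrable_finsetSum _ fun j _ => hI2 i j]
  have : ∀ i, ∫ ω, ∑ j, v i * (auxP (S ω) i j * u j) ∂μ = p * (v i * u i) := by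
    intro i
    rw [integral_finsetSum _ fun j _ => hI2 i j]
    simp only [integral_const_mul, integral_mul_const, hE, Matrix.one_apply]
    simp
    ring
  rw [Finset.sum_congr rfl fun i _ => this i, ← Finset.mul_sum]
  simp only [PiLp.inner_apply]
  simp [mul_comm]

/-- One-step expected progress of SSCN (case `ψ = 0`): if `f` is convex and
`C²` with `L`-Lipschitz gradient (`∇²f ⪯ L·I`) and `M`-Lipschitz Hessian, the random sketch
`S(ω)` has a.e. full column rank with `E[P^{S}] = (τ/d)·I`, and `h(ω)` is a.e. a global
minimizer of the cubic model `T_{S(ω)}(x, ·)`, then for the step `x⁺(ω) = x + S(ω)h(ω)` and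
every `y`:
`E[f(x⁺)] ≤ (1 − τ/d) f(x) + (τ/d) f(y) + (τ/d)(((d−τ)/d)(L/2)‖y−x‖² + (M/3)‖y−x‖³)`. -/
theorem sscn_one_step_progress
    (d τ : ℕ) (hτ1 : 1 ≤ τ) (hτd : τ ≤ d)
    (f : EuclideanSpace ℝ (Fin d) → ℝ)
    (hconv : ConvexOn ℝ Set.univ f) (hf : ContDiff ℝ 2 f)
    (L M : ℝ) (hL : 0 ≤ L) (hM : 0 ≤ M)
    (hLup : ∀ (x u : EuclideanSpace ℝ (Fin d)),
      (inner ℝ (fderiv ℝ (gradient f) x u) u : ℝ) ≤ L * ‖u‖ ^ 2)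
    (hHessLip : ∀ x y : EuclideanSpace ℝ (Fin d),
      ‖fderiv ℝ (gradient f) x - fderiv ℝ (gradient f) y‖ ≤ M * ‖x - y‖)
    {Ω : Type*} [MeasurableSpace Ω] (μ : MeasureTheory.Measure Ω) [IsProbabilityMeasure μ]
    (S : Ω → Matrix (Fin d) (Fin τ) ℝ)
    (hmeas : ∀ i j, Measurable fun ω => S ω i j)
    (hrank : ∀ᵐ ω ∂μ, IsUnit ((S ω)ᵀ * S ω))
    (hE : ∀ i j, ∫ ω, (S ω * ((S ω)ᵀ * S ω)⁻¹ * (S ω)ᵀ) i j ∂μ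
      = ((τ : ℝ) / (d : ℝ)) * (1 : Matrix (Fin d) (Fin d) ℝ) i j)
    (x : EuclideanSpace ℝ (Fin d)) (h : Ω → Fin τ → ℝ)
    (hmin : ∀ᵐ ω ∂μ, ∀ h' : Fin τ → ℝ,
      ((S ω)ᵀ.mulVec (fromE (gradient f x)) ⬝ᵥ h ω
          + (1 / 2) * ((S ω)ᵀ.mulVec
              (fromE (fderiv ℝ (gradient f) x (toE ((S ω).mulVec (h ω))))) ⬝ᵥ h ω)
          + M / 6 * ‖toE ((S ω).mulVec (h ω))‖ ^ 3)
        ≤ ((S ω)ᵀ.mulVec (fromE (gradient f x)) ⬝ᵥ h'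
          + (1 / 2) * ((S ω)ᵀ.mulVec
              (fromE (fderiv ℝ (gradient f) x (toE ((S ω).mulVec h')))) ⬝ᵥ h')
          + M / 6 * ‖toE ((S ω).mulVec h')‖ ^ 3))
    (hint : Integrable (fun ω => f (x + toE ((S ω).mulVec (h ω)))) μ) :
    ∀ y : EuclideanSpace ℝ (Fin d),
      ∫ ω, f (x + toE ((S ω).mulVec (h ω))) ∂μ
        ≤ (1 - (τ : ℝ) / (d : ℝ)) * f x + ((τ : ℝ) / (d : ℝ)) * f y
          + ((τ : ℝ) / (d : ℝ)) * ((((d : ℝ) - (τ : ℝ)) / (d : ℝ)) * (L / 2) * ‖y - x‖ ^ 2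
              + (M / 3) * ‖y - x‖ ^ 3) := by
  intro y
  set p : ℝ := (τ : ℝ) / (d : ℝ) with hp
  have hd0 : (0:ℝ) < d := by
    have : 0 < d := by omega
    exact_mod_cast this
  have hp0 : 0 ≤ p := by positivity
  have hp1 : p ≤ 1 := by
    rw [hp, div_le_one hd0]
    exact_mod_cast hτd
  have hq : ((d : ℝ) - (τ : ℝ)) / (d : ℝ) = 1 - p := by
    rw [hp]
    field_simp
  rw [hq]
  set u := y - x with hu
  set g := gradient f x with hg
  set H := fderiv ℝ (gradient f) x with hH
  let w : Ω → EuclideanSpace ℝ (Fin d) := fun ω => toE ((auxP (S ω)).mulVec (fromE u))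
  have key : ∀ v : EuclideanSpace ℝ (Fin d), Integrable (fun ω => (inner ℝ v (w ω) : ℝ)) μ ∧
      ∫ ω, (inner ℝ v (w ω) : ℝ) ∂μ = p * inner ℝ v u :=
    fun v => auxP_integral μ S hmeas hrank p hE v u
  -- one vector that collects all terms linear in `P u`
  let c : EuclideanSpace ℝ (Fin d) := g + (p / 2) • H u + (p / 2) • (ContinuousLinearMap.adjoint H) u
    + (L / 2 * (1 - 2 * p) + M / 6 * ‖u‖) • u
  let K : ℝ := f x - p ^ 2 / 2 * inner ℝ (H u) u + L / 2 * p ^ 2 * ‖u‖ ^ 2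
  have hpt : ∀ᵐ ω ∂μ, f (x + toE ((S ω).mulVec (h ω))) ≤ K + inner ℝ c (w ω) := by
    filter_upwards [hrank, hmin] with ω hω hm
    have hm' := hm ((((S ω)ᵀ * S ω)⁻¹ * (S ω)ᵀ).mulVec (fromE u))
    have hw : toE ((S ω).mulVec ((((S ω)ᵀ * S ω)⁻¹ * (S ω)ᵀ).mulVec (fromE u))) = w ω := by
      simp [w, auxP, Matrix.mulVec_mulVec, Matrix.mul_assoc]
    simp only [aux_dot, hw] at hm'
    have ht := (abs_le.1 (aux_taylor f hf M hHessLip x (toE ((S ω).mulVec (h ω))))).2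
    have hin : inner ℝ (w ω) (w ω) = (inner ℝ u (w ω) : ℝ) := auxP_inner (S ω) hω u
    have hnorm : ‖w ω‖ ≤ ‖u‖ := auxP_norm (S ω) hω u
    have hin' : ‖w ω‖ ^ 2 = (inner ℝ u (w ω) : ℝ) := by
      rw [← hin, real_inner_self_eq_norm_sq]
    have hcube : M / 6 * ‖w ω‖ ^ 3 ≤ M / 6 * (‖u‖ * inner ℝ u (w ω)) := by
      rw [← hin']
      have : ‖w ω‖ ^ 3 = ‖w ω‖ * ‖w ω‖ ^ 2 := by ring
      rw [this]
      gcongr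
    have hquad := hLup x (w ω - p • u)
    rw [← real_inner_self_eq_norm_sq (w ω - p • u)] at hquad
    simp only [map_sub, map_smul, inner_sub_left, inner_sub_right, inner_smul_left,
      inner_smul_right, hin, real_inner_comm u (w ω), real_inner_self_eq_norm_sq u] at hquad
    have hc : inner ℝ c (w ω) = inner ℝ g (w ω) + p / 2 * inner ℝ (H u) (w ω)
        + p / 2 * inner ℝ (H (w ω)) u
        + (L / 2 * (1 - 2 * p) + M / 6 * ‖u‖) * (inner ℝ u (w ω) : ℝ) := by
      simp only [c, inner_add_left, inner_smul_left, ContinuousLinearMap.adjoint_inner_left,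
        real_inner_comm u (H (w ω))]
      simp
    rw [hc]
    have hcomm : inner ℝ (w ω) u = (inner ℝ u (w ω) : ℝ) := real_inner_comm _ _
    simp only [hcomm, conj_trivial, ← hH] at hquad
    simp only [← hg, ← hH] at ht
    simp only [K]
    linarith
  have hstep : ∫ ω, f (x + toE ((S ω).mulVec (h ω))) ∂μ ≤ K + p * inner ℝ c u := by
    rw [← (key c).2]
    have := integral_mono_ae hint ((integrable_const K).add (key c).1) hpt
    refine this.trans (le_of_eq ?_)
    simp only [Pi.add_apply]
    rw [integral_add (integrable_const K) (key c).1]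
    simp
  refine hstep.trans ?_
  have hcu : inner ℝ c u = inner ℝ g u + p * inner ℝ (H u) u
        + (L / 2 * (1 - 2 * p) + M / 6 * ‖u‖) * ‖u‖ ^ 2 := by
    simp only [c, inner_add_left, inner_smul_left, ContinuousLinearMap.adjoint_inner_left,
      real_inner_self_eq_norm_sq, real_inner_comm u (H u)]
    simp
    ring
  rw [hcu]
  have ht := (abs_le.1 (aux_taylor f hf M hHessLip x (p • u))).1
  have hcv := hconv.2 (Set.mem_univ x) (Set.mem_univ y) (sub_nonneg.2 hp1) hp0 (by ring)
  have hxy : (1 - p) • x + p • y = x + p • u := by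
    rw [hu]
    module
  rw [hxy] at hcv
  simp only [smul_eq_mul] at hcv
  simp only [← hg, ← hH, map_smul, inner_smul_left, inner_smul_right, norm_smul,
    Real.norm_eq_abs, abs_of_nonneg hp0, conj_trivial, mul_pow] at ht
  have hp3 : M / 6 * (p ^ 3 * ‖u‖ ^ 3) ≤ M / 6 * (p * ‖u‖ ^ 3) := by
    have : p ^ 3 ≤ p := pow_le_of_le_one hp0 hp1 (by norm_num)
    gcongr
  simp only [K]
  linarith
end

section
/- Let x, g' ∈ ℝ^d with g' ≠ 0 and let H', M' > 0. If x⁺ ∈ ℝ^d is a global minimizer over y ∈ ℝ^d of the function y ↦ ⟨g', y − x⟩ + (H'/2)‖y − x‖² + (M'/6)‖y − x‖³, then x⁺ = x − 2g' / (H' + √(H'² + 2M'‖g'‖)); moreover ‖x⁺ − x‖ = (√(H'² + 2M'‖g'‖) − H')/M'. -/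
/-- Closed-form solution of the cubically regularized model minimization:
if `x⁺` globally minimizes `y ↦ ⟨g', y−x⟩ + (H'/2)‖y−x‖² + (M'/6)‖y−x‖³` with `g' ≠ 0` and
`H', M' > 0`, then `x⁺ = x − 2g'/(H' + √(H'² + 2M'‖g'‖))` and
`‖x⁺ − x‖ = (√(H'² + 2M'‖g'‖) − H')/M'`. -/
theorem cubic_model_explicit_minimizer
    (d : ℕ) (x g' : EuclideanSpace ℝ (Fin d)) (hg : g' ≠ 0)
    (H' M' : ℝ) (hH : 0 < H') (hM : 0 < M')
    (xplus : EuclideanSpace ℝ (Fin d))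
    (hmin : ∀ y : EuclideanSpace ℝ (Fin d),
      (inner ℝ g' (xplus - x) : ℝ) + H' / 2 * ‖xplus - x‖ ^ 2 + M' / 6 * ‖xplus - x‖ ^ 3
        ≤ (inner ℝ g' (y - x) : ℝ) + H' / 2 * ‖y - x‖ ^ 2 + M' / 6 * ‖y - x‖ ^ 3) :
    xplus = x - (2 / (H' + Real.sqrt (H' ^ 2 + 2 * M' * ‖g'‖))) • g'
    ∧ ‖xplus - x‖ = (Real.sqrt (H' ^ 2 + 2 * M' * ‖g'‖) - H') / M' := by
  set s := Real.sqrt (H' ^ 2 + 2 * M' * ‖g'‖) with hs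
  have hG : 0 < ‖g'‖ := norm_pos_iff.mpr hg
  have hs2 : s ^ 2 = H' ^ 2 + 2 * M' * ‖g'‖ := Real.sq_sqrt (by positivity)
  have hs0 : 0 ≤ s := Real.sqrt_nonneg _
  have hk : 0 < H' + s := by linarith
  set c := 2 / (H' + s) with hc
  have hc0 : 0 < c := by positivity
  have hcs : c * (H' + s) = 2 := by rw [hc]; field_simp
  set r := c * ‖g'‖ with hr
  have hr0 : 0 < r := by positivity
  have hrM : r = (s - H') / M' := by
    rw [hr, hc]; field_simp; nlinarith
  have hMr : M' * r = s - H' := by rw [hrM]; field_simp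
  set h := xplus - x with hh
  have hm := hmin (x - c • g')
  have e1 : x - c • g' - x = -(c • g') := by abel
  have e2 : ‖-(c • g')‖ = r := by
    rw [norm_neg, norm_smul, Real.norm_of_nonneg hc0.le]
  have e3 : inner ℝ g' (-(c • g')) = -(c * ‖g'‖ ^ 2) := by
    rw [inner_neg_right, inner_smul_right, real_inner_self_eq_norm_sq]
  rw [e1, e2, e3] at hm
  have e4 : ‖h + c • g'‖ ^ 2 = ‖h‖ ^ 2 + 2 * (c * inner ℝ g' h) + r ^ 2 := by
    rw [norm_add_sq_real, inner_smul_right, real_inner_comm, ← norm_neg (c • g'), e2]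
  have ht : 0 ≤ ‖h‖ := norm_nonneg _
  generalize inner ℝ g' h = p at hm e4
  have hK : H' + s = 2 * H' + M' * r := by linarith
  have hp : p * 4 = (2 * H' + M' * r) * (‖h + c • g'‖ ^ 2 - ‖h‖ ^ 2 - r ^ 2) := by
    rw [e4, ← hK]; linear_combination (-2 * p) * hcs
  have hq : (c * ‖g'‖ ^ 2) * 2 = (2 * H' + M' * r) * r ^ 2 := by
    rw [← hK, hr]; linear_combination (-c * ‖g'‖ ^ 2) * hcs
  have hn : 0 ≤ M' * ((‖h‖ - r) ^ 2 * (2 * ‖h‖ + r)) := by positivity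
  have hz : (2 * H' + M' * r) * ‖h + c • g'‖ ^ 2 ≤ 0 := by nlinarith
  have hz2 : ‖h + c • g'‖ ^ 2 ≤ 0 := by
    by_contra hcon
    have : 0 < (2 * H' + M' * r) * ‖h + c • g'‖ ^ 2 := mul_pos (by positivity) (not_le.mp hcon)
    linarith
  have hz3 : h + c • g' = 0 := by
    rw [← norm_eq_zero]
    exact pow_eq_zero_iff (two_ne_zero) |>.mp (le_antisymm hz2 (by positivity))
  have hfin : h = -(c • g') := eq_neg_of_add_eq_zero_left hz3
  refine ⟨?_, ?_⟩
  · have : xplus = x + h := by rw [hh]; abel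
    rw [this, hfin]; abel
  · rw [hfin, e2, hrM]
end

section
/- Let f : ℝ^d → ℝ be twice continuously differentiable and convex with L-Lipschitz continuous gradient, with a minimizer x* and minimum value f* := f(x*). Fix x⁰ ∈ ℝ^d and let χ⁰ := {x : f(x) ≤ f(x⁰)} be its sublevel set. Let S ∈ ℝ^{d×τ} have full column rank with operator norm ‖S‖, let M_S > 0, let ϱ > 0, and suppose m₀ := inf_{x ∈ χ⁰} λ_min(Sᵀ∇²f(x)S) > 0. If f(x⁰) − f* ≤ ϱ⁴·2·m₀⁴/(L·M_S²·‖S‖²), then for every x ∈ χ⁰: √(M_S/2)·‖Sᵀ∇f(x)‖^{1/2}·I_τ ⪯ ϱ·Sᵀ∇²f(x)S. -/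
open Matrix

/-- The `τ × τ` matrix `Sᵀ ∇²f(x) S` of the subspace Hessian. -/
noncomputable def subHess {d τ : ℕ} (f : EuclideanSpace ℝ (Fin d) → ℝ)
    (S : Matrix (Fin d) (Fin τ) ℝ) (x : EuclideanSpace ℝ (Fin d)) :
    Matrix (Fin τ) (Fin τ) ℝ :=
  Matrix.of fun i j =>
    Sᵀ.mulVec (fromE (fderiv ℝ (gradient f) x (toE (S.mulVec (Pi.single j 1))))) i

theorem sscn_grad_bound {d : ℕ} (f : EuclideanSpace ℝ (Fin d) → ℝ) (hf : Differentiable ℝ f)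
    (L : ℝ) (hL : 0 < L)
    (hLip : ∀ x y : EuclideanSpace ℝ (Fin d), ‖gradient f x - gradient f y‖ ≤ L * ‖x - y‖)
    (xs x : EuclideanSpace ℝ (Fin d)) (hmin : ∀ y, f xs ≤ f y) :
    ‖gradient f x‖ ^ 2 ≤ 2 * L * (f x - f xs) := by
  set g := gradient f x with hg
  have hd : ∀ t : ℝ, HasDerivAt (fun t : ℝ => f (x - t • g) + t * ‖g‖ ^ 2 - L * t ^ 2 / 2 * ‖g‖ ^ 2)
      (-(inner ℝ (gradient f (x - t • g)) g) + ‖g‖ ^ 2 - L * t * ‖g‖ ^ 2) t := by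
    intro t
    have h1 : HasDerivAt (fun t : ℝ => x - t • g) (-g) t := by
      simpa using ((hasDerivAt_id t).smul_const g).const_sub x
    have h2 := (hf (x - t • g)).hasGradientAt.hasFDerivAt.comp_hasDerivAt t h1
    have h3 : HasDerivAt (fun t : ℝ => t * ‖g‖ ^ 2) (‖g‖ ^ 2) t := by
      simpa using (hasDerivAt_id t).mul_const (‖g‖ ^ 2)
    have h4 : HasDerivAt (fun t : ℝ => L * t ^ 2 / 2 * ‖g‖ ^ 2) (L * t * ‖g‖ ^ 2) t := by
      have := ((((hasDerivAt_id t).pow 2).const_mul L).div_const 2).mul_const (‖g‖ ^ 2)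
      exact this.congr_deriv (by push_cast; simp only [id]; ring)
    exact ((h2.add h3).sub h4).congr_deriv (by simp)
  have hanti : AntitoneOn (fun t : ℝ => f (x - t • g) + t * ‖g‖ ^ 2 - L * t ^ 2 / 2 * ‖g‖ ^ 2)
      (Set.Ici 0) := by
    apply antitoneOn_of_deriv_nonpos (convex_Ici 0)
    · exact fun t _ => (hd t).continuousAt.continuousWithinAt
    · exact fun t _ => (hd t).differentiableAt.differentiableWithinAt
    · intro t ht
      rw [interior_Ici] at ht
      have ht : 0 < t := ht
      rw [(hd t).deriv]
      have h1 := hLip x (x - t • g)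
      rw [← hg, sub_sub_cancel, norm_smul, Real.norm_eq_abs, abs_of_pos ht] at h1
      have h2 := real_inner_le_norm (g - gradient f (x - t • g)) g
      rw [inner_sub_left, real_inner_self_eq_norm_sq] at h2
      nlinarith [mul_le_mul_of_nonneg_right h1 (norm_nonneg g)]
  have h := hanti (Set.mem_Ici.2 le_rfl) (Set.mem_Ici.2 (inv_pos.2 hL).le) (inv_pos.2 hL).le
  have hm := hmin (x - L⁻¹ • g)
  simp only [zero_smul, sub_zero] at h
  have h5 : L⁻¹ * ‖g‖ ^ 2 - L * L⁻¹ ^ 2 / 2 * ‖g‖ ^ 2 = ‖g‖ ^ 2 / (2 * L) := by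
    field_simp
    ring
  have h6 : ‖g‖ ^ 2 / (2 * L) ≤ f x - f xs := by
    rw [← h5]
    linarith
  rw [div_le_iff₀ (by positivity)] at h6
  linarith

theorem sscn_inner_eq {n : ℕ} (u v : EuclideanSpace ℝ (Fin n)) :
    inner ℝ u v = fromE u ⬝ᵥ fromE v := by
  simp [fromE, dotProduct, PiLp.inner_apply, mul_comm]

theorem sscn_norm_sq {n : ℕ} (v : Fin n → ℝ) : ‖toE v‖ ^ 2 = v ⬝ᵥ v := by
  rw [← real_inner_self_eq_norm_sq, sscn_inner_eq]; rfl

theorem sscn_transpose_bound {d τ : ℕ} (S : Matrix (Fin d) (Fin τ) ℝ) (c : ℝ) (hc : 0 ≤ c)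
    (h : ∀ h : Fin τ → ℝ, ‖toE (S.mulVec h)‖ ≤ c * ‖toE h‖) (g : EuclideanSpace ℝ (Fin d)) :
    ‖toE (Sᵀ.mulVec (fromE g))‖ ≤ c * ‖g‖ := by
  set w := Sᵀ.mulVec (fromE g) with hw
  have h1 : ‖toE w‖ ^ 2 = inner ℝ g (toE (S.mulVec w)) := by
    rw [sscn_norm_sq, sscn_inner_eq]
    change w ⬝ᵥ w = fromE g ⬝ᵥ (S *ᵥ w)
    rw [dotProduct_mulVec (fromE g), ← mulVec_transpose]
  have h2 := real_inner_le_norm g (toE (S.mulVec w))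
  have h3 := mul_le_mul_of_nonneg_left (h w) (norm_nonneg g)
  rcases (norm_nonneg (toE w)).eq_or_lt with h0 | h0
  · rw [← h0]; positivity
  · nlinarith

theorem sscn_symm {d τ : ℕ} (f : EuclideanSpace ℝ (Fin d) → ℝ) (hf : ContDiff ℝ 2 f)
    (S : Matrix (Fin d) (Fin τ) ℝ) (x : EuclideanSpace ℝ (Fin d)) :
    (subHess f S x).IsHermitian := by
  have hs : IsSymmSndFDerivAt ℝ f x := hf.contDiffAt.isSymmSndFDerivAt (by simp)
  have hdd : DifferentiableAt ℝ (fderiv ℝ f) x :=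
    ((hf.fderiv_right (m := 1) (by norm_num)).differentiable (by norm_num)) x
  have key : ∀ v w : EuclideanSpace ℝ (Fin d),
      inner ℝ (fderiv ℝ (gradient f) x v) w = fderiv ℝ (fderiv ℝ f) x v w := by
    intro v w
    have h1 : HasFDerivAt (gradient f) (((InnerProductSpace.toDual ℝ
        (EuclideanSpace ℝ (Fin d))).symm.toContinuousLinearEquiv.toContinuousLinearMap).comp
          (fderiv ℝ (fderiv ℝ f) x)) x :=
      ((InnerProductSpace.toDual ℝ (EuclideanSpace ℝ (Fin d))).symm.toContinuousLinearEquiv.toContinuousLinearMap).hasFDerivAt.comp x hdd.hasFDerivAt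
    rw [h1.fderiv]
    simp
  have ent : ∀ i j, subHess f S x i j = fderiv ℝ (fderiv ℝ f) x
      (toE (S.mulVec (Pi.single j 1))) (toE (S.mulVec (Pi.single i 1))) := by
    intro i j
    rw [← key, sscn_inner_eq]
    change _ = _ ⬝ᵥ (S *ᵥ Pi.single i 1)
    rw [dotProduct_mulVec, ← mulVec_transpose, dotProduct_single_one]
    rfl
  ext i j
  rw [conjTranspose_apply, ent, ent, star_trivial, hs.eq]

/-- Local bound on the cubic regularization term: for a convex `C²`
function `f` with `L`-Lipschitz gradient, if `m₀ = inf_{x ∈ χ⁰} λ_min(Sᵀ∇²f(x)S) > 0` and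
`f(x⁰) − f* ≤ ϱ⁴·2m₀⁴/(L·M_S²·‖S‖²)`, then for every `x` in the sublevel set `χ⁰`:
`√(M_S/2)·‖Sᵀ∇f(x)‖^{1/2}·I ⪯ ϱ·Sᵀ∇²f(x)S`. -/
theorem sscn_local_regularizer_bound
    (d τ : ℕ) (f : EuclideanSpace ℝ (Fin d) → ℝ) (hf : ContDiff ℝ 2 f)
    (hconv : ConvexOn ℝ Set.univ f)
    (L : ℝ) (hL : 0 < L)
    (hLip : ∀ x y : EuclideanSpace ℝ (Fin d), ‖gradient f x - gradient f y‖ ≤ L * ‖x - y‖)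
    (xstar : EuclideanSpace ℝ (Fin d)) (hxstar : IsMinOn f Set.univ xstar)
    (x0 : EuclideanSpace ℝ (Fin d))
    (S : Matrix (Fin d) (Fin τ) ℝ) (hrank : IsUnit (Sᵀ * S))
    (normS : ℝ)
    (hnormS : IsLeast {c : ℝ | 0 ≤ c ∧ ∀ h : Fin τ → ℝ,
      ‖toE (S.mulVec h)‖ ≤ c * ‖toE h‖} normS)
    (MS : ℝ) (hMS : 0 < MS) (ϱ : ℝ) (hϱ : 0 < ϱ)
    (m0 : ℝ) (hm0pos : 0 < m0)
    (hm0 : IsGreatest {t : ℝ | ∀ x : EuclideanSpace ℝ (Fin d), f x ≤ f x0 →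
      ∀ v : Fin τ → ℝ, t * ‖toE v‖ ^ 2 ≤ (subHess f S x).mulVec v ⬝ᵥ v} m0)
    (hlevel : f x0 - f xstar ≤ ϱ ^ 4 * (2 * m0 ^ 4) / (L * MS ^ 2 * normS ^ 2)) :
    ∀ x : EuclideanSpace ℝ (Fin d), f x ≤ f x0 →
      (ϱ • subHess f S x
        - (Real.sqrt (MS / 2) * Real.sqrt ‖toE (Sᵀ.mulVec (fromE (gradient f x)))‖) •
          (1 : Matrix (Fin τ) (Fin τ) ℝ)).PosSemidef := by
  intro x hx
  have hH := sscn_symm f hf S x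
  set G := ‖toE (Sᵀ.mulVec (fromE (gradient f x)))‖ with hG
  have hG0 : 0 ≤ G := norm_nonneg _
  obtain ⟨⟨hn0, hn⟩, -⟩ := hnormS
  have hT : G ≤ normS * ‖gradient f x‖ := sscn_transpose_bound S normS hn0 hn _
  have hgb := sscn_grad_bound f (hf.differentiable (by norm_num)) L hL hLip xstar x
    (fun y => hxstar (Set.mem_univ y))
  have hsc : Real.sqrt (MS / 2) * Real.sqrt G ≤ ϱ * m0 := by
    rw [← Real.sqrt_mul (by positivity)]
    apply Real.sqrt_le_iff.2 ⟨by positivity, ?_⟩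
    refine (sq_le_sq₀ (by positivity) (by positivity)).1 ?_
    rcases hn0.eq_or_lt with h0 | h0
    · have : G = 0 := le_antisymm (by simpa [← h0] using hT) hG0
      rw [this]
      simp
      positivity
    · rw [le_div_iff₀ (by positivity)] at hlevel
      have h1 : G ^ 2 ≤ normS ^ 2 * ‖gradient f x‖ ^ 2 := by
        rw [← mul_pow]
        exact pow_le_pow_left₀ hG0 hT 2
      have h2 : G ^ 2 ≤ normS ^ 2 * (2 * L * (f x0 - f xstar)) := by
        refine h1.trans (mul_le_mul_of_nonneg_left (hgb.trans ?_) (by positivity))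
        exact mul_le_mul_of_nonneg_left (by linarith) (by positivity)
      have h3 := mul_le_mul_of_nonneg_left h2 (sq_nonneg MS)
      nlinarith
  refine PosSemidef.of_dotProduct_mulVec_nonneg ?_ ?_
  · refine IsHermitian.sub ?_ ?_
    · ext i j
      simpa using congrArg (fun A => ϱ * A i j) hH.eq
    · ext i j
      simp [one_apply, eq_comm]
  · intro v
    have h1 := hm0.1 x hx v
    rw [sscn_norm_sq] at h1
    have h0 : 0 ≤ v ⬝ᵥ v := by rw [← sscn_norm_sq]; positivity
    rw [star_trivial, sub_mulVec, smul_mulVec, smul_mulVec, one_mulVec, dotProduct_sub,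
      dotProduct_smul, dotProduct_smul, smul_eq_mul, smul_eq_mul,
      dotProduct_comm v (subHess f S x *ᵥ v)]
    nlinarith [mul_le_mul_of_nonneg_right hsc h0, mul_le_mul_of_nonneg_left h1 hϱ.le]
end

section
/- Let A ∈ ℝ^{d×d} be symmetric positive definite, let x* ∈ ℝ^d, and define f(x) := (1/2)(x − x*)ᵀA(x − x*). Let (Ω, μ) be a probability space and S : Ω → ℝ^{d×τ} a measurable map such that S(ω)ᵀ A S(ω) is invertible for almost every ω. Given x ∈ ℝ^d, define for almost every ω the exact subspace-minimization step x⁺(ω) := x − S(ω)·(S(ω)ᵀ A S(ω))⁻¹·S(ω)ᵀ·A·(x − x*) (which minimizes f over the affine subspace x + range(S(ω))). Let ζ := λ_min( A^{1/2} · E[ S(ω)(S(ω)ᵀ A S(ω))⁻¹ S(ω)ᵀ ] · A^{1/2} ). Then 0 ≤ ζ ≤ 1 and for every x ∈ ℝ^d: E[f(x⁺)] ≤ (1 − ζ)·f(x). -/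
open Matrix MeasureTheory
open scoped MatrixOrder

lemma sp_move {n : ℕ} (G : Matrix (Fin n) (Fin n) ℝ) (hG : Gᵀ = G) (u w : Fin n → ℝ) :
    G.mulVec u ⬝ᵥ w = u ⬝ᵥ G.mulVec w := by
  rw [Matrix.dotProduct_mulVec, ← Matrix.mulVec_transpose, hG]

lemma sp_G {d τ : ℕ} (A : Matrix (Fin d) (Fin d) ℝ) (hA : Aᵀ = A)
    (S : Matrix (Fin d) (Fin τ) ℝ) (h : IsUnit (Sᵀ * A * S)) :
    (S * (Sᵀ * A * S)⁻¹ * Sᵀ)ᵀ = S * (Sᵀ * A * S)⁻¹ * Sᵀ ∧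
    (S * (Sᵀ * A * S)⁻¹ * Sᵀ) * A * (S * (Sᵀ * A * S)⁻¹ * Sᵀ) = S * (Sᵀ * A * S)⁻¹ * Sᵀ := by
  constructor
  · simp only [Matrix.transpose_mul, Matrix.transpose_nonsing_inv, Matrix.transpose_transpose, hA,
      Matrix.mul_assoc]
  · have h2 := Matrix.nonsing_inv_mul _ ((Matrix.isUnit_iff_isUnit_det _).1 h)
    calc _ = S * ((Sᵀ * A * S)⁻¹ * (Sᵀ * A * S)) * (Sᵀ * A * S)⁻¹ * Sᵀ := by
          simp only [Matrix.mul_assoc]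
      _ = _ := by rw [h2, Matrix.mul_one]

lemma sp_step {d : ℕ} (A G : Matrix (Fin d) (Fin d) ℝ) (hA : Aᵀ = A) (hG : Gᵀ = G)
    (hGAG : G * A * G = G) (y : Fin d → ℝ) :
    A.mulVec (y - G.mulVec (A.mulVec y)) ⬝ᵥ (y - G.mulVec (A.mulVec y)) =
      A.mulVec y ⬝ᵥ y - G.mulVec (A.mulVec y) ⬝ᵥ (A.mulVec y) := by
  have h3 : G.mulVec (A.mulVec (G.mulVec (A.mulVec y))) = G.mulVec (A.mulVec y) := by
    conv_rhs => rw [← hGAG]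
    simp only [Matrix.mulVec_mulVec, Matrix.mul_assoc]
  rw [Matrix.mulVec_sub, sub_dotProduct, dotProduct_sub, dotProduct_sub,
    sp_move A hA (G.mulVec (A.mulVec y)) y,
    ← sp_move G hG (A.mulVec y) (A.mulVec y),
    ← sp_move G hG (A.mulVec (G.mulVec (A.mulVec y))) (A.mulVec y), h3]
  ring

lemma sp_nonneg {d : ℕ} (A G : Matrix (Fin d) (Fin d) ℝ) (hA : A.PosDef) (hG : Gᵀ = G)
    (hGAG : G * A * G = G) (w : Fin d → ℝ) : 0 ≤ G.mulVec w ⬝ᵥ w := by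
  have h := hA.posSemidef.dotProduct_mulVec_nonneg (G.mulVec w)
  rw [star_trivial, sp_move G hG] at h
  rw [Matrix.mulVec_mulVec, Matrix.mulVec_mulVec, hGAG, dotProduct_comm] at h
  exact h

lemma sp_quad {n : ℕ} (M : Matrix (Fin n) (Fin n) ℝ) (w : Fin n → ℝ) :
    M.mulVec w ⬝ᵥ w = ∑ i, ∑ j, M i j * (w j * w i) := by
  simp only [Matrix.mulVec, dotProduct, Finset.sum_mul, mul_assoc]

lemma sp_int {n : ℕ} {Ω : Type*} [MeasurableSpace Ω] (μ : MeasureTheory.Measure Ω)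
    (G : Ω → Matrix (Fin n) (Fin n) ℝ) (hint : ∀ i j, Integrable (fun ω => G ω i j) μ)
    (w : Fin n → ℝ) :
    Integrable (fun ω => (G ω).mulVec w ⬝ᵥ w) μ ∧
    (Matrix.of fun i j => ∫ ω, G ω i j ∂μ).mulVec w ⬝ᵥ w = ∫ ω, (G ω).mulVec w ⬝ᵥ w ∂μ := by
  simp only [sp_quad]
  have h1 : ∀ i j, Integrable (fun ω => G ω i j * (w j * w i)) μ :=
    fun i j => (hint i j).mul_const _
  have h2 : ∀ i, Integrable (fun ω => ∑ j, G ω i j * (w j * w i)) μ :=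
    fun i => integrable_finsetSum _ fun j _ => h1 i j
  refine ⟨integrable_finsetSum _ fun i _ => h2 i, ?_⟩
  rw [integral_finsetSum _ fun i _ => h2 i]
  refine Finset.sum_congr rfl fun i _ => ?_
  rw [integral_finsetSum _ fun j _ => h1 i j]
  refine Finset.sum_congr rfl fun j _ => ?_
  rw [integral_mul_const, Matrix.of_apply]

/-- Sketch-and-project / SSCN on a quadratic: for
`f(x) = ½(x−x*)ᵀA(x−x*)` with `A ≻ 0` and the exact subspace-minimization step
`x⁺(ω) = x − S(ω)(S(ω)ᵀAS(ω))⁻¹S(ω)ᵀA(x−x*)`, the stochastic condition number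
`ζ = λ_min(A^{1/2} E[S(SᵀAS)⁻¹Sᵀ] A^{1/2})` satisfies `0 ≤ ζ ≤ 1` and
`E[f(x⁺)] ≤ (1 − ζ) f(x)` for every `x`. -/
theorem sketch_and_project_linear_rate
    (d τ : ℕ) (A : Matrix (Fin d) (Fin d) ℝ) (hA : A.PosDef)
    (xstar : Fin d → ℝ) (f : (Fin d → ℝ) → ℝ)
    (hfdef : f = fun x => (1 / 2) * (A.mulVec (x - xstar) ⬝ᵥ (x - xstar)))
    {Ω : Type*} [MeasurableSpace Ω] (μ : MeasureTheory.Measure Ω) [IsProbabilityMeasure μ]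
    (S : Ω → Matrix (Fin d) (Fin τ) ℝ)
    (hmeas : ∀ i j, Measurable fun ω => S ω i j)
    (hinv : ∀ᵐ ω ∂μ, IsUnit ((S ω)ᵀ * A * S ω))
    (hint : ∀ i j, Integrable (fun ω => (S ω * ((S ω)ᵀ * A * S ω)⁻¹ * (S ω)ᵀ) i j) μ)
    (hfint : ∀ x : Fin d → ℝ, Integrable (fun ω =>
      f (x - (S ω).mulVec ((((S ω)ᵀ * A * S ω)⁻¹).mulVec
        ((S ω)ᵀ.mulVec (A.mulVec (x - xstar)))))) μ)
    (ζ : ℝ)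
    (hζ : IsGreatest {t : ℝ | ∀ v : Fin d → ℝ,
      t * ‖toE v‖ ^ 2 ≤
        (CFC.sqrt A *
          (Matrix.of fun i j => ∫ ω, (S ω * ((S ω)ᵀ * A * S ω)⁻¹ * (S ω)ᵀ) i j ∂μ) *
            CFC.sqrt A).mulVec v ⬝ᵥ v} ζ) :
    (0 ≤ ζ ∧ ζ ≤ 1)
    ∧ ∀ x : Fin d → ℝ,
      ∫ ω, f (x - (S ω).mulVec ((((S ω)ᵀ * A * S ω)⁻¹).mulVec
          ((S ω)ᵀ.mulVec (A.mulVec (x - xstar))))) ∂μ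
        ≤ (1 - ζ) * f x := by
  have hAT : Aᵀ = A := by simpa using hA.isHermitian.eq
  have hA0 : (0 : Matrix (Fin d) (Fin d) ℝ) ≤ A := Matrix.nonneg_iff_posSemidef.2 hA.posSemidef
  have hBB : CFC.sqrt A * CFC.sqrt A = A := CFC.sqrt_mul_sqrt_self A hA0
  have hBT : (CFC.sqrt A)ᵀ = CFC.sqrt A := by
    have := (Matrix.nonneg_iff_posSemidef.1 (CFC.sqrt_nonneg A)).isHermitian.eq
    simpa using this
  set B := CFC.sqrt A with hB
  set G : Ω → Matrix (Fin d) (Fin d) ℝ := fun ω => S ω * ((S ω)ᵀ * A * S ω)⁻¹ * (S ω)ᵀ with hGdef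
  have hI := sp_int μ G hint
  set E : Matrix (Fin d) (Fin d) ℝ := Matrix.of fun i j => ∫ ω, G ω i j ∂μ with hE
  have hG : ∀ᵐ ω ∂μ, (G ω)ᵀ = G ω ∧ G ω * A * G ω = G ω := by
    filter_upwards [hinv] with ω h using sp_G A hAT (S ω) h
  have hEnn : ∀ w, 0 ≤ E.mulVec w ⬝ᵥ w := by
    intro w
    rw [(hI w).2]
    apply integral_nonneg_of_ae
    filter_upwards [hG] with ω h using sp_nonneg A (G ω) hA h.1 h.2 w
  have hBEB : ∀ v, (B * E * B).mulVec v ⬝ᵥ v = E.mulVec (B.mulVec v) ⬝ᵥ B.mulVec v := by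
    intro v
    rw [← Matrix.mulVec_mulVec, ← Matrix.mulVec_mulVec, sp_move B hBT]
  have hmem : ∀ v : Fin d → ℝ, ζ * ‖toE v‖ ^ 2 ≤ (B * E * B).mulVec v ⬝ᵥ v := hζ.1
  have hζ0 : 0 ≤ ζ := by
    apply hζ.2
    intro v
    have h := hEnn (B.mulVec v)
    rw [← hBEB] at h
    rw [zero_mul]
    exact h
  have hnorm : ∀ v : Fin d → ℝ, ‖toE v‖ ^ 2 = v ⬝ᵥ v := by
    intro v
    rw [EuclideanSpace.real_norm_sq_eq]
    simp [toE, dotProduct, sq]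
  have hkey : ∀ y, ζ * (A.mulVec y ⬝ᵥ y) ≤ E.mulVec (A.mulVec y) ⬝ᵥ A.mulVec y := by
    intro y
    have h := hmem (B.mulVec y)
    have hBy : B.mulVec (B.mulVec y) = A.mulVec y := by rw [Matrix.mulVec_mulVec, hBB]
    rw [hnorm, hBEB, ← sp_move B hBT (B.mulVec y) y, hBy] at h
    exact h
  have hstep : ∀ x : Fin d → ℝ, ∀ᵐ ω ∂μ, f (x - (S ω).mulVec ((((S ω)ᵀ * A * S ω)⁻¹).mulVec
          ((S ω)ᵀ.mulVec (A.mulVec (x - xstar))))) =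
        f x - (1 / 2) * ((G ω).mulVec (A.mulVec (x - xstar)) ⬝ᵥ A.mulVec (x - xstar)) := by
    intro x
    filter_upwards [hG] with ω h
    have e : (S ω).mulVec ((((S ω)ᵀ * A * S ω)⁻¹).mulVec
          ((S ω)ᵀ.mulVec (A.mulVec (x - xstar)))) = (G ω).mulVec (A.mulVec (x - xstar)) := by
      rw [Matrix.mulVec_mulVec, Matrix.mulVec_mulVec]
    rw [e, hfdef]
    simp only
    rw [sub_right_comm, sp_step A (G ω) hAT h.1 h.2]
    ring
  have hmain : ∀ x : Fin d → ℝ,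
      ∫ ω, f (x - (S ω).mulVec ((((S ω)ᵀ * A * S ω)⁻¹).mulVec
          ((S ω)ᵀ.mulVec (A.mulVec (x - xstar))))) ∂μ
        ≤ (1 - ζ) * f x := by
    intro x
    rw [integral_congr_ae (hstep x), integral_sub (integrable_const _) ((hI _).1.const_mul _),
      integral_const_mul, ← (hI _).2]
    have h := hkey (x - xstar)
    simp only [integral_const, probReal_univ, one_smul]
    rw [hfdef]
    simp only
    linarith
  refine ⟨⟨hζ0, ?_⟩, hmain⟩
  have hd : ∃ i : Fin d, True := by
    by_contra hne
    have : IsEmpty (Fin d) := ⟨fun i => hne ⟨i, trivial⟩⟩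
    have h : ζ + 1 ≤ ζ := by
      apply hζ.2
      intro v
      rw [hnorm]
      simp [dotProduct]
    linarith
  obtain ⟨i, -⟩ := hd
  have h := hmain (xstar + 1)
  have hpos : 0 < f (xstar + 1) := by
    rw [hfdef]
    have := hA.dotProduct_mulVec_pos (x := (1 : Fin d → ℝ))
      (fun h => one_ne_zero (congrFun h i))
    rw [star_trivial, dotProduct_comm] at this
    simp only [add_sub_cancel_left]
    linarith
  have hnn : ∀ x, 0 ≤ f x := by
    intro x
    rw [hfdef]
    have := hA.posSemidef.dotProduct_mulVec_nonneg (x - xstar)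
    rw [star_trivial, dotProduct_comm] at this
    simp only
    linarith
  have h2 := (integral_nonneg (μ := μ) fun ω => hnn _).trans h
  by_contra hlt
  nlinarith
end
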